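/- arXiv:1104.0237 — 2 statements merged into one kernel-verified Lean document; each statement's English description precedes it below -/
import Mathlib

section
/- Let Y_n be a sequence of finite nonempty sets with |Y_n| = M_n → ∞, let T_n : Y_n → Y_n be permutations, and let F_n : Y_n → ℝ be a uniformly integrable sequence. Let K_n and L_n be sequences of positive natural numbers such that K_n/M_n is bounded, liminf_{n→∞} K_n/M_n > 0, and lim_{n→∞} K_n/L_n = 1. Then for every ε > 0, lim_{n→∞} (1/M_n)·|{y ∈ Y_n : |A_{K_n}(F_n,T_n,y) − A_{L_n}(F_n,T_n,y)| ≥ ε}| = 0. -/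
open Filter Topology

/-- The ergodic average `A_K(F,T,y) = (1/K)·∑_{i<K} F(Tⁱy)`. -/
noncomputable def ergAvg {Y : Type*} (T : Y → Y) (F : Y → ℝ) (K : ℕ) (y : Y) : ℝ :=
  (1 / (K : ℝ)) * ∑ i ∈ Finset.range K, F (T^[i] y)

/-!
Multiplying by `L` gives `L • (A_K - A_L) = (S_K - S_L) - (K - L) • A_K` for the ergodic sums `S_n`
and averages `A_n`. Both terms on the right have `L¹` norm at most `|K - L| ‖F‖₁` because the
dynamics preserves the `L¹` norm, so `‖A_K - A_L‖₁ ≤ 2 |K / L - 1| ‖F‖₁`. Uniform integrability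
bounds the norms `‖F_n‖₁`, so the averages get close in `L¹`, hence in measure.
-/

section Birkhoff

open MeasureTheory

variable {α E : Type*} [NormedAddCommGroup E]

lemma integral_norm_comp_of_measurePreserving {β : Type*} [MeasurableSpace α]
    [MeasurableSpace β] {μ : Measure α} {ν : Measure β} {T : α → β} {F : β → E}
    (hT : MeasurePreserving T μ ν) (hF : AEStronglyMeasurable F ν) :
    ∫ x, ‖F (T x)‖ ∂μ = ∫ y, ‖F y‖ ∂ν := by
  have hFmap : AEStronglyMeasurable (fun y => ‖F y‖) (μ.map T) := hT.map_eq.symm ▸ hF.norm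
  rw [← integral_map hT.aemeasurable hFmap, hT.map_eq]

lemma mul_norm_birkhoffAverage_sub_le [NormedSpace ℝ E] (T : α → α) (F : α → E) (K L : ℕ)
    (x : α) :
    L * ‖birkhoffAverage ℝ T F K x - birkhoffAverage ℝ T F L x‖ ≤
      ‖birkhoffSum T F K x - birkhoffSum T F L x‖ +
        |(K : ℝ) - L| * ‖birkhoffAverage ℝ T F K x‖ := by
  have hsum (n : ℕ) : (n : ℝ) • birkhoffAverage ℝ T F n x = birkhoffSum T F n x := by
    rcases eq_or_ne n 0 with rfl | hn
    · simp
    · exact smul_inv_smul₀ (Nat.cast_ne_zero.2 hn) _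
  have hsplit : (L : ℝ) • (birkhoffAverage ℝ T F K x - birkhoffAverage ℝ T F L x) =
      (birkhoffSum T F K x - birkhoffSum T F L x) -
        ((K : ℝ) - L) • birkhoffAverage ℝ T F K x := by
    rw [← hsum K, ← hsum L]
    module
  calc L * ‖birkhoffAverage ℝ T F K x - birkhoffAverage ℝ T F L x‖
      = ‖(L : ℝ) • (birkhoffAverage ℝ T F K x - birkhoffAverage ℝ T F L x)‖ := by
        rw [norm_smul, Real.norm_natCast]
    _ ≤ _ := by
        rw [hsplit, ← Real.norm_eq_abs, ← norm_smul]
        exact norm_sub_le _ _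

variable [MeasurableSpace α] {μ : Measure α} {T : α → α} {F : α → E}

lemma integrable_birkhoffSum (hT : MeasurePreserving T μ μ) (hF : Integrable F μ) (n : ℕ) :
    Integrable (birkhoffSum T F n) μ :=
  integrable_finsetSum _ fun i _ => (hT.iterate i).integrable_comp_of_integrable hF

lemma integrable_birkhoffAverage [NormedSpace ℝ E] (hT : MeasurePreserving T μ μ)
    (hF : Integrable F μ) (n : ℕ) : Integrable (birkhoffAverage ℝ T F n) μ :=
  (integrable_birkhoffSum hT hF n).smul _

lemma integral_norm_birkhoffSum_le (hT : MeasurePreserving T μ μ) (hF : Integrable F μ) (n : ℕ) :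
    ∫ x, ‖birkhoffSum T F n x‖ ∂μ ≤ n * ∫ x, ‖F x‖ ∂μ := by
  have hFi (i : ℕ) : Integrable (fun x => ‖F (T^[i] x)‖) μ :=
    ((hT.iterate i).integrable_comp_of_integrable hF).norm
  calc ∫ x, ‖birkhoffSum T F n x‖ ∂μ
      ≤ ∫ x, ∑ i ∈ Finset.range n, ‖F (T^[i] x)‖ ∂μ :=
        integral_mono (integrable_birkhoffSum hT hF n).norm
          (integrable_finsetSum _ fun i _ => hFi i) fun x => norm_sum_le _ _
    _ = ∑ i ∈ Finset.range n, ∫ x, ‖F (T^[i] x)‖ ∂μ := integral_finsetSum _ fun i _ => hFi i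
    _ = n * ∫ x, ‖F x‖ ∂μ := by
        simp only [fun i => integral_norm_comp_of_measurePreserving (hT.iterate i)
          hF.aestronglyMeasurable, Finset.sum_const, Finset.card_range, nsmul_eq_mul]

lemma integral_norm_birkhoffSum_sub_le (hT : MeasurePreserving T μ μ) (hF : Integrable F μ)
    (K L : ℕ) :
    ∫ x, ‖birkhoffSum T F K x - birkhoffSum T F L x‖ ∂μ ≤ |(K : ℝ) - L| * ∫ x, ‖F x‖ ∂μ := by
  wlog h : L ≤ K generalizing K L
  · simpa only [norm_sub_rev, abs_sub_comm] using this L K (le_of_not_ge h)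
  obtain ⟨m, rfl⟩ := Nat.exists_eq_add_of_le h
  have hSm := integrable_birkhoffSum hT hF m
  simp only [birkhoffSum_add, add_sub_cancel_left, Nat.cast_add, Nat.abs_cast]
  rw [integral_norm_comp_of_measurePreserving (hT.iterate L) hSm.aestronglyMeasurable]
  exact integral_norm_birkhoffSum_le hT hF m

variable [NormedSpace ℝ E]

lemma integral_norm_birkhoffAverage_le (hT : MeasurePreserving T μ μ) (hF : Integrable F μ)
    (n : ℕ) : ∫ x, ‖birkhoffAverage ℝ T F n x‖ ∂μ ≤ ∫ x, ‖F x‖ ∂μ := by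
  simp only [birkhoffAverage, norm_smul, norm_inv, Real.norm_natCast, integral_const_mul]
  exact inv_mul_le_of_le_mul₀ n.cast_nonneg (integral_nonneg fun _ => norm_nonneg _)
    (integral_norm_birkhoffSum_le hT hF n)

lemma integral_norm_birkhoffAverage_sub_le (hT : MeasurePreserving T μ μ) (hF : Integrable F μ)
    (K : ℕ) {L : ℕ} (hL : L ≠ 0) :
    ∫ x, ‖birkhoffAverage ℝ T F K x - birkhoffAverage ℝ T F L x‖ ∂μ ≤
      2 * |(K : ℝ) / L - 1| * ∫ x, ‖F x‖ ∂μ := by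
  have hL₀ : (0 : ℝ) < L := by positivity
  have hratio : |(K : ℝ) - L| = L * |(K : ℝ) / L - 1| := by
    rw [← abs_of_pos hL₀, ← abs_mul, abs_of_pos hL₀, mul_sub_one, mul_div_cancel₀ _ hL₀.ne']
  have hA := integrable_birkhoffAverage hT hF
  have hS := integrable_birkhoffSum hT hF
  have hSsub : Integrable (fun x => ‖birkhoffSum T F K x - birkhoffSum T F L x‖) μ :=
    ((hS K).sub (hS L)).norm
  refine le_of_mul_le_mul_left ?_ hL₀
  calc L * ∫ x, ‖birkhoffAverage ℝ T F K x - birkhoffAverage ℝ T F L x‖ ∂μ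
      = ∫ x, L * ‖birkhoffAverage ℝ T F K x - birkhoffAverage ℝ T F L x‖ ∂μ :=
        (integral_const_mul _ _).symm
    _ ≤ ∫ x, (‖birkhoffSum T F K x - birkhoffSum T F L x‖ +
          |(K : ℝ) - L| * ‖birkhoffAverage ℝ T F K x‖) ∂μ :=
        integral_mono (((hA K).sub (hA L)).norm.const_mul _)
          (hSsub.add ((hA K).norm.const_mul _))
          (mul_norm_birkhoffAverage_sub_le T F K L)
    _ = ∫ x, ‖birkhoffSum T F K x - birkhoffSum T F L x‖ ∂μ +
          |(K : ℝ) - L| * ∫ x, ‖birkhoffAverage ℝ T F K x‖ ∂μ := by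
        rw [integral_add hSsub ((hA K).norm.const_mul _), integral_const_mul]
    _ ≤ |(K : ℝ) - L| * ∫ x, ‖F x‖ ∂μ + |(K : ℝ) - L| * ∫ x, ‖F x‖ ∂μ := by
        gcongr ?_ + _ * ?_
        · exact integral_norm_birkhoffSum_sub_le hT hF K L
        · exact integral_norm_birkhoffAverage_le hT hF K
    _ = L * (2 * |(K : ℝ) / L - 1| * ∫ x, ‖F x‖ ∂μ) := by
        rw [hratio]
        ring

end Birkhoff

section Convergence

open MeasureTheory

lemma integral_norm_le_add_setIntegral_norm {α E : Type*} [MeasurableSpace α]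
    [NormedAddCommGroup E] {μ : Measure α} [IsZeroOrProbabilityMeasure μ] {F : α → E}
    (hF : Integrable F μ) {k : ℝ} (hk : 0 ≤ k) :
    ∫ x, ‖F x‖ ∂μ ≤ k + ∫ x in {x | k < ‖F x‖}, ‖F x‖ ∂μ := by
  set s : Set α := {x | k < ‖F x‖}
  have hs : NullMeasurableSet s μ := nullMeasurableSet_lt aemeasurable_const hF.norm.aemeasurable
  have hbulk : ∫ x in sᶜ, ‖F x‖ ∂μ ≤ k :=
    calc ∫ x in sᶜ, ‖F x‖ ∂μ ≤ ∫ _ in sᶜ, k ∂μ :=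
          setIntegral_mono_on₀ hF.norm.integrableOn integrableOn_const hs.compl
            fun _ hx => not_lt.1 hx
      _ = μ.real sᶜ * k := by rw [setIntegral_const, smul_eq_mul]
      _ ≤ k := mul_le_of_le_one_left hk measureReal_le_one
  rw [← integral_add_compl₀ hs hF.norm, add_comm]
  gcongr

variable {ι : Type*} {l : Filter ι} {α : ι → Type*} [∀ i, MeasurableSpace (α i)]
  {μ : ∀ i, Measure (α i)} {E : Type*} [NormedAddCommGroup E]

lemma tendsto_measureReal_le_norm_of_tendsto_integral_norm {G : ∀ i, α i → E}
    (hG : ∀ i, Integrable (G i) (μ i)) (h : Tendsto (fun i => ∫ x, ‖G i x‖ ∂μ i) l (𝓝 0))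
    {ε : ℝ} (hε : 0 < ε) : Tendsto (fun i => (μ i).real {x | ε ≤ ‖G i x‖}) l (𝓝 0) := by
  refine squeeze_zero (fun _ => measureReal_nonneg) (fun i => ?_) (by simpa using h.div_const ε)
  rw [le_div_iff₀' hε]
  exact mul_meas_ge_le_integral_of_nonneg (ae_of_all _ fun _ => norm_nonneg _) (hG i).norm ε

lemma isBoundedUnder_integral_norm_of_setIntegral_norm_le
    [∀ i, IsZeroOrProbabilityMeasure (μ i)] {F : ∀ i, α i → E}
    (hF : ∀ i, Integrable (F i) (μ i)) {k C : ℝ} (hk : 0 ≤ k)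
    (htail : ∀ᶠ i in l, ∫ x in {x | k < ‖F i x‖}, ‖F i x‖ ∂μ i ≤ C) :
    IsBoundedUnder (· ≤ ·) l fun i => ∫ x, ‖F i x‖ ∂μ i :=
  isBoundedUnder_of_eventually_le <| htail.mono fun i hi =>
    (integral_norm_le_add_setIntegral_norm (hF i) hk).trans (add_le_add_right hi k)

variable [NormedSpace ℝ E] {T : ∀ i, α i → α i} {F : ∀ i, α i → E} {K L : ι → ℕ}

lemma tendsto_integral_norm_birkhoffAverage_sub
    (hT : ∀ i, MeasurePreserving (T i) (μ i) (μ i)) (hF : ∀ i, Integrable (F i) (μ i))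
    (hbdd : IsBoundedUnder (· ≤ ·) l fun i => ∫ x, ‖F i x‖ ∂μ i)
    (hKL : Tendsto (fun i => (K i : ℝ) / L i) l (𝓝 1)) :
    Tendsto (fun i => ∫ x, ‖birkhoffAverage ℝ (T i) (F i) (K i) x -
      birkhoffAverage ℝ (T i) (F i) (L i) x‖ ∂μ i) l (𝓝 0) := by
  obtain ⟨C, hC⟩ := hbdd
  have hlim : Tendsto (fun i => 2 * |(K i : ℝ) / L i - 1| * C) l (𝓝 0) := by
    simpa using ((hKL.sub_const 1).abs.const_mul 2).mul_const C
  refine squeeze_zero' (.of_forall fun _ => integral_nonneg fun _ => norm_nonneg _) ?_ hlim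
  filter_upwards [hC, hKL.eventually_ne one_ne_zero] with i hCi hne
  have hL : L i ≠ 0 := fun h => hne (by simp [h])
  exact (integral_norm_birkhoffAverage_sub_le (hT i) (hF i) (K i) hL).trans (by gcongr; exact hCi)

theorem erg_mean_stabilization_in_measure_general
    (hT : ∀ i, MeasurePreserving (T i) (μ i) (μ i)) (hF : ∀ i, Integrable (F i) (μ i))
    (hbdd : IsBoundedUnder (· ≤ ·) l fun i => ∫ x, ‖F i x‖ ∂μ i)
    (hKL : Tendsto (fun i => (K i : ℝ) / L i) l (𝓝 1)) {ε : ℝ} (hε : 0 < ε) :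
    Tendsto (fun i => (μ i).real {x | ε ≤ ‖birkhoffAverage ℝ (T i) (F i) (K i) x -
      birkhoffAverage ℝ (T i) (F i) (L i) x‖}) l (𝓝 0) :=
  tendsto_measureReal_le_norm_of_tendsto_integral_norm
    (fun i => (integrable_birkhoffAverage (hT i) (hF i) _).sub
      (integrable_birkhoffAverage (hT i) (hF i) _))
    (tendsto_integral_norm_birkhoffAverage_sub hT hF hbdd hKL) hε

end Convergence

section UniformOn

open MeasureTheory ProbabilityTheory

variable {α : Type*} [MeasurableSpace α]

lemma uniformOn_univ_eq_smul_count : uniformOn (Set.univ : Set α) =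
    (Measure.count (Set.univ : Set α))⁻¹ • Measure.count := by
  rw [uniformOn, ProbabilityTheory.cond, Measure.restrict_univ]

lemma measurePreserving_uniformOn_univ [DiscreteMeasurableSpace α] {T : α → α}
    (hT : Function.Bijective T) :
    MeasurePreserving T (uniformOn Set.univ) (uniformOn Set.univ) := by
  have hcount : MeasurePreserving T Measure.count Measure.count := by
    refine ⟨.of_discrete, Measure.ext fun s hs => ?_⟩
    rw [Measure.map_apply .of_discrete hs, ← Measure.count_injective_image hT.injective,
      Set.image_preimage_eq s hT.surjective]
  rw [uniformOn_univ_eq_smul_count]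
  exact hcount.smul_measure _

variable [Fintype α] [MeasurableSingletonClass α]

lemma measureReal_uniformOn_univ (p : α → Prop) [DecidablePred p] :
    (uniformOn Set.univ).real {x | p x} =
      1 / (Fintype.card α : ℝ) * (Finset.univ.filter p).card := by
  have h : {x | p x} = (Finset.univ.filter p : Finset α) := by simp
  rw [measureReal_def, uniformOn_univ, h, Measure.count_apply_finset]
  simp [div_eq_inv_mul]

lemma setIntegral_uniformOn_univ (p : α → Prop) [DecidablePred p] (f : α → ℝ) :
    ∫ x in {x | p x}, f x ∂uniformOn Set.univ =
      1 / (Fintype.card α : ℝ) * ∑ x ∈ Finset.univ.filter p, f x := by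
  have hsingle (x : α) : (uniformOn Set.univ).real {x} = 1 / (Fintype.card α : ℝ) := by
    simp [measureReal_def, uniformOn_univ]
  have hp : {x | p x} = (Finset.univ.filter p : Finset α) := by simp
  rw [hp, setIntegral_finset _ (.of_finite (Finset.finite_toSet _))]
  simp only [hsingle, smul_eq_mul, Finset.mul_sum]

end UniformOn

lemma ergAvg_eq_birkhoffAverage {Y : Type*} (T : Y → Y) (F : Y → ℝ) (K : ℕ) :
    ergAvg T F K = birkhoffAverage ℝ T F K := by
  funext y
  rw [ergAvg, birkhoffAverage, birkhoffSum, one_div, smul_eq_mul]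

open scoped Classical in
/-- For a sequence of finite sets `Y n` of cardinality `M n → ∞`, permutations `T n`,
a uniformly integrable sequence `F n`, and sequences `K n, L n ≥ 1` with `K n / M n`
bounded, `liminf K n / M n > 0` and `K n / L n → 1`, the proportion of points where the
ergodic averages `A_{K n}` and `A_{L n}` differ by at least `ε` tends to `0`. -/
theorem erg_mean_stabilization_in_measure
    (Y : ℕ → Type*) [∀ n, Fintype (Y n)] [∀ n, Nonempty (Y n)]
    (hMtop : Tendsto (fun n => Fintype.card (Y n)) atTop atTop)
    (T : ∀ n, Y n → Y n) (hT : ∀ n, Function.Bijective (T n))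
    (F : ∀ n, Y n → ℝ)
    (hUI : ∀ ε > (0 : ℝ), ∃ n₀ k₀ : ℕ, ∀ n ≥ n₀, ∀ k ≥ k₀,
      (1 / (Fintype.card (Y n) : ℝ)) *
        ∑ x ∈ Finset.univ.filter (fun x : Y n => (k : ℝ) < |F n x|), |F n x| < ε)
    (K L : ℕ → ℕ) (hK1 : ∀ n, 1 ≤ K n) (hL1 : ∀ n, 1 ≤ L n)
    (hKbdd : ∃ B : ℝ, ∀ n, (K n : ℝ) / (Fintype.card (Y n) : ℝ) ≤ B)
    (hKpos : 0 < Filter.atTop.liminf (fun n => (K n : ℝ) / (Fintype.card (Y n) : ℝ)))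
    (hKL : Tendsto (fun n => (K n : ℝ) / (L n : ℝ)) atTop (𝓝 1)) :
    ∀ ε > (0 : ℝ),
      Tendsto (fun n => (1 / (Fintype.card (Y n) : ℝ)) *
          ((Finset.univ.filter (fun y : Y n =>
            ε ≤ |ergAvg (T n) (F n) (K n) y - ergAvg (T n) (F n) (L n) y|)).card : ℝ))
        atTop (𝓝 0) := by
  intro ε hε
  let _ (n : ℕ) : MeasurableSpace (Y n) := ⊤
  simp only [ergAvg_eq_birkhoffAverage, ← measureReal_uniformOn_univ,
    ← setIntegral_uniformOn_univ, ← Real.norm_eq_abs] at hUI ⊢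
  obtain ⟨n₀, k₀, htail⟩ := hUI 1 one_pos
  have hbdd := isBoundedUnder_integral_norm_of_setIntegral_norm_le (fun _ => .of_finite)
    k₀.cast_nonneg ((eventually_ge_atTop n₀).mono fun n hn => (htail n hn k₀ le_rfl).le)
  exact erg_mean_stabilization_in_measure_general
    (fun n => measurePreserving_uniformOn_univ (hT n)) (fun _ => .of_finite) hbdd hKL hε
end

section
/- Let (X, ρ) be a compact metric space and τ : X → X a continuous, uniquely ergodic, minimal transformation (τ has exactly one invariant Borel probability measure ν, and every τ-orbit is dense in X). Let Y_n ⊆ X be finite nonempty subsets and T_n : Y_n → Y_n permutations such that max_{x ∈ X} dist(x, Y_n) → 0 and max_{y ∈ Y_n} ρ(T_n(y), τ(y)) → 0 as n → ∞. Then for every continuous function f : X → ℝ, every sequence of natural numbers K_n → ∞, and every sequence of points y_n ∈ Y_n, lim_{n→∞} (1/K_n)·Σ_{j=0}^{K_n−1} f(T_nʲ(y_n)) = ∫_X f dν. -/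
open MeasureTheory Filter Topology

/-!
The empirical measures of long orbit segments of `T n` are almost `τ`-invariant: `g ∘ τ` at one
point of the segment is close to `g` at the next point, and the sums of `g` over a segment and over
its shift differ only by the two end terms. Since probability measures on a compact space form a
compact space, the empirical measures have limits along ultrafilters; each such limit is
`τ`-invariant, hence equal to `ν`.
-/

section Averages

variable {ι E : Type*} [SeminormedAddCommGroup E] [NormedSpace ℝ E] {l : Filter ι} {K : ι → ℕ}

theorem norm_inv_smul_sum_range_le {u : ℕ → E} {k : ℕ} {ε : ℝ} (hε : 0 ≤ ε)
    (hu : ∀ j < k, ‖u j‖ ≤ ε) : ‖(k : ℝ)⁻¹ • ∑ j ∈ Finset.range k, u j‖ ≤ ε := by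
  have hsum : ‖∑ j ∈ Finset.range k, u j‖ ≤ k * ε := by
    simpa using norm_sum_le_of_le (Finset.range k) fun j hj => hu j (Finset.mem_range.1 hj)
  calc ‖(k : ℝ)⁻¹ • ∑ j ∈ Finset.range k, u j‖
      = (k : ℝ)⁻¹ * ‖∑ j ∈ Finset.range k, u j‖ := by
        rw [norm_smul, norm_inv, RCLike.norm_natCast]
    _ ≤ (k : ℝ)⁻¹ * (k * ε) := by gcongr
    _ = (k : ℝ)⁻¹ * k * ε := (mul_assoc _ _ _).symm
    _ ≤ ε := mul_le_of_le_one_left hε inv_mul_le_one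

theorem tendsto_inv_smul_sum_range_zero {u : ι → ℕ → E}
    (hu : ∀ ε > (0 : ℝ), ∀ᶠ i in l, ∀ j < K i, ‖u i j‖ < ε) :
    Tendsto (fun i => (K i : ℝ)⁻¹ • ∑ j ∈ Finset.range (K i), u i j) l (𝓝 0) := by
  refine NormedAddGroup.tendsto_nhds_zero.2 fun ε hε => ?_
  filter_upwards [hu (ε / 2) (half_pos hε)] with i hi
  exact (norm_inv_smul_sum_range_le (half_pos hε).le fun j hj => (hi j hj).le).trans_lt
    (half_lt_self hε)

theorem tendsto_inv_smul_sum_range_succ_sub (hK : Tendsto K l atTop) {u : ι → ℕ → E} {C : ℝ}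
    (hu : ∀ i j, ‖u i j‖ ≤ C) :
    Tendsto (fun i => (K i : ℝ)⁻¹ • ∑ j ∈ Finset.range (K i), (u i (j + 1) - u i j)) l (𝓝 0) := by
  have hinv : Tendsto (fun i => (K i : ℝ)⁻¹) l (𝓝 0) :=
    tendsto_inv_atTop_nhds_zero_nat.comp hK
  simp only [Finset.sum_range_sub]
  exact hinv.zero_smul_isBoundedUnder_le <| isBoundedUnder_of
    ⟨C + C, fun i => (norm_sub_le _ _).trans (add_le_add (hu i _) (hu i _))⟩

end Averages

section PseudoOrbits

variable {X ι : Type*}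

open scoped Uniformity in
/-- The segments `x i 0, …, x i (K i)` form an asymptotic pseudo-orbit of `τ` along `l` if the
errors between `x i (j + 1)` and `τ (x i j)` tend to zero, uniformly over the `K i` steps. The
terms of `x i` beyond index `K i` are unconstrained. -/
def IsAsymptoticPseudoOrbit [UniformSpace X] (τ : X → X) (l : Filter ι) (K : ι → ℕ)
    (x : ι → ℕ → X) : Prop :=
  ∀ V ∈ 𝓤 X, ∀ᶠ i in l, ∀ j < K i, (x i (j + 1), τ (x i j)) ∈ V

theorem isAsymptoticPseudoOrbit_iterate [PseudoMetricSpace X] {τ : X → X} {l : Filter ι}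
    {Y : ι → Set X} {T : ι → X → X} (hT : ∀ i, Set.MapsTo (T i) (Y i) (Y i))
    (happrox : ∀ ε > (0 : ℝ), ∀ᶠ i in l, ∀ y ∈ Y i, dist (T i y) (τ y) < ε)
    {y : ι → X} (hy : ∀ i, y i ∈ Y i) (K : ι → ℕ) :
    IsAsymptoticPseudoOrbit τ l K fun i j => (T i)^[j] (y i) := by
  intro V hV
  obtain ⟨ε, hε, hεV⟩ := Metric.mem_uniformity_dist.1 hV
  filter_upwards [happrox ε hε] with i hi j _
  rw [Function.iterate_succ_apply']
  exact hεV (hi _ ((hT i).iterate j (hy i)))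

theorem IsAsymptoticPseudoOrbit.tendsto_inv_smul_sum_comp_sub [UniformSpace X] {E : Type*}
    [SeminormedAddCommGroup E] [NormedSpace ℝ E] {τ : X → X} {l : Filter ι} {K : ι → ℕ}
    {x : ι → ℕ → X} (hx : IsAsymptoticPseudoOrbit τ l K x) (hK : Tendsto K l atTop)
    {g : X → E} (hg : UniformContinuous g) {C : ℝ} (hC : ∀ z, ‖g z‖ ≤ C) :
    Tendsto (fun i => (K i : ℝ)⁻¹ • ∑ j ∈ Finset.range (K i), (g (τ (x i j)) - g (x i j)))
      l (𝓝 0) := by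
  have hstep : Tendsto (fun i => (K i : ℝ)⁻¹ •
      ∑ j ∈ Finset.range (K i), (g (τ (x i j)) - g (x i (j + 1)))) l (𝓝 0) := by
    refine tendsto_inv_smul_sum_range_zero fun ε hε => ?_
    filter_upwards [hx _ (hg (Metric.dist_mem_uniformity hε))] with i hi j hj
    rw [← dist_eq_norm, dist_comm]
    exact hi j hj
  have hshift := tendsto_inv_smul_sum_range_succ_sub hK fun i j => hC (x i j)
  simpa only [← smul_add, ← Finset.sum_add_distrib, sub_add_sub_cancel, add_zero]
    using hstep.add hshift

end PseudoOrbits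

section EmpiricalMeasure

variable {X : Type*} [MeasurableSpace X]

/-- The empirical measure of the first `k` terms of the sequence `x`, which gives mass `1 / k` to
each of them. For `k = 0` it is the zero measure. -/
noncomputable def empiricalMeasure (x : ℕ → X) (k : ℕ) : Measure X :=
  (k : ENNReal)⁻¹ • ∑ j ∈ Finset.range k, Measure.dirac (x j)

theorem isProbabilityMeasure_empiricalMeasure (x : ℕ → X) {k : ℕ} (hk : k ≠ 0) :
    IsProbabilityMeasure (empiricalMeasure x k) :=
  ⟨by simp [empiricalMeasure, ENNReal.inv_mul_cancel, hk]⟩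

theorem integral_empiricalMeasure {E : Type*} [NormedAddCommGroup E] [NormedSpace ℝ E]
    [CompleteSpace E] (x : ℕ → X) (k : ℕ) {g : X → E} (hg : StronglyMeasurable g) :
    ∫ z, g z ∂empiricalMeasure x k = (k : ℝ)⁻¹ • ∑ j ∈ Finset.range k, g (x j) := by
  have hint : ∀ j ∈ Finset.range k, Integrable g (Measure.dirac (x j)) := fun j _ =>
    integrable_dirac' hg enorm_lt_top
  simp only [empiricalMeasure, integral_smul_measure, integral_finsetSum_measure hint,
    integral_dirac' _ _ hg, ENNReal.toReal_inv, ENNReal.toReal_natCast]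

end EmpiricalMeasure

section WeakLimits

theorem measurePreserving_of_forall_integral_comp_eq {X : Type*} [TopologicalSpace X]
    [HasOuterApproxClosed X] [MeasurableSpace X] [BorelSpace X] {τ : X → X} (hτ : Continuous τ)
    {m : Measure X} [IsFiniteMeasure m]
    (h : ∀ g : X → ℝ, Continuous g → ∫ z, g (τ z) ∂m = ∫ z, g z ∂m) :
    MeasurePreserving τ m m := by
  refine ⟨hτ.measurable, ext_of_forall_integral_eq_of_IsFiniteMeasure fun g => ?_⟩
  rw [integral_map hτ.aemeasurable g.continuous.aestronglyMeasurable, h g g.continuous]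

variable {X ι : Type*} [TopologicalSpace X] [CompactSpace X] [T2Space X] [MeasurableSpace X]
  [BorelSpace X]

theorem exists_isProbabilityMeasure_tendsto_integral {U : Ultrafilter ι} {μ : ι → Measure X}
    (hμ : ∀ᶠ i in U, IsProbabilityMeasure (μ i)) :
    ∃ m : Measure X, IsProbabilityMeasure m ∧ ∀ g : X → ℝ, Continuous g →
      Tendsto (fun i => ∫ z, g z ∂μ i) U (𝓝 (∫ z, g z ∂m)) := by
  obtain ⟨P, hP⟩ : ∃ P : ι → ProbabilityMeasure X, ∀ᶠ i in U, (P i : Measure X) = μ i :=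
    Eventually.choice (r := fun i (Q : ProbabilityMeasure X) => (Q : Measure X) = μ i) <|
      hμ.mono fun i hi => ⟨⟨μ i, hi⟩, rfl⟩
  have hlim : Tendsto P U (𝓝 (U.map P).lim) := (U.map P).le_nhds_lim
  refine ⟨(U.map P).lim, inferInstance, fun g hg => ?_⟩
  refine (ProbabilityMeasure.tendsto_iff_forall_integral_tendsto.1 hlim
    (BoundedContinuousFunction.mkOfCompact ⟨g, hg⟩)).congr' ?_
  filter_upwards [hP] with i hi
  rw [← hi]
  rfl

theorem tendsto_integral_of_asymptotically_invariant [HasOuterApproxClosed X] {τ : X → X}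
    (hτ : Continuous τ) {ν : Measure X}
    (huniq : ∀ m : Measure X, IsProbabilityMeasure m → MeasurePreserving τ m m → m = ν)
    {l : Filter ι} {μ : ι → Measure X} (hμ : ∀ᶠ i in l, IsProbabilityMeasure (μ i))
    (hinv : ∀ g : X → ℝ, Continuous g →
      Tendsto (fun i => ∫ z, g (τ z) ∂μ i - ∫ z, g z ∂μ i) l (𝓝 0))
    {f : X → ℝ} (hf : Continuous f) :
    Tendsto (fun i => ∫ z, f z ∂μ i) l (𝓝 (∫ z, f z ∂ν)) := by
  refine (tendsto_iff_ultrafilter _ _ _).2 fun U hU => ?_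
  obtain ⟨m, hm, hlim⟩ := exists_isProbabilityMeasure_tendsto_integral (hU hμ)
  have hm_inv : MeasurePreserving τ m m :=
    measurePreserving_of_forall_integral_comp_eq hτ fun g hg => sub_eq_zero.1 <|
      tendsto_nhds_unique ((hlim _ (hg.comp hτ)).sub (hlim g hg)) ((hinv g hg).mono_left hU)
  rw [← huniq m hm hm_inv]
  exact hlim f hf

end WeakLimits

theorem uniquely_ergodic_finite_approximation_general {X ι : Type*} [UniformSpace X]
    [CompactSpace X] [T2Space X] [HasOuterApproxClosed X] [MeasurableSpace X] [BorelSpace X]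
    {τ : X → X} (hτ : Continuous τ) {ν : Measure X}
    (huniq : ∀ μ : Measure X, IsProbabilityMeasure μ → MeasurePreserving τ μ μ → μ = ν)
    {l : Filter ι} {K : ι → ℕ} (hK : Tendsto K l atTop) {x : ι → ℕ → X}
    (hx : IsAsymptoticPseudoOrbit τ l K x) {f : X → ℝ} (hf : Continuous f) :
    Tendsto (fun i => (1 / (K i : ℝ)) * ∑ j ∈ Finset.range (K i), f (x i j))
      l (𝓝 (∫ z, f z ∂ν)) := by
  have haverage : ∀ (i : ι) {g : X → ℝ}, Continuous g →
      ∫ z, g z ∂empiricalMeasure (x i) (K i) =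
        (K i : ℝ)⁻¹ • ∑ j ∈ Finset.range (K i), g (x i j) := fun i _ hg =>
    integral_empiricalMeasure (x i) (K i) hg.stronglyMeasurable
  have hprob : ∀ᶠ i in l, IsProbabilityMeasure (empiricalMeasure (x i) (K i)) :=
    (hK.eventually_ne_atTop 0).mono fun i => isProbabilityMeasure_empiricalMeasure (x i)
  have hinv : ∀ g : X → ℝ, Continuous g → Tendsto (fun i =>
      ∫ z, g (τ z) ∂empiricalMeasure (x i) (K i) - ∫ z, g z ∂empiricalMeasure (x i) (K i))
      l (𝓝 0) := by
    intro g hg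
    obtain ⟨C, hC⟩ := (isCompact_range hg).isBounded.exists_norm_le
    simpa only [haverage _ hg, haverage _ (hg.comp' hτ), ← smul_sub, ← Finset.sum_sub_distrib]
      using hx.tendsto_inv_smul_sum_comp_sub hK
        (CompactSpace.uniformContinuous_of_continuous hg) (Set.forall_mem_range.1 hC)
  simpa only [haverage _ hf, smul_eq_mul, one_div]
    using tendsto_integral_of_asymptotically_invariant hτ huniq hprob hinv hf

/-- For a uniquely ergodic, minimal continuous transformation `τ` of a compact metric
space `X` with unique invariant Borel probability measure `ν`, and finite approximations
`(Y n, T n)` with `max_{x ∈ X} dist(x, Y n) → 0` and `max_{y ∈ Y n} ρ(T n y, τ y) → 0`,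
the ergodic averages of any continuous `f` along the approximations converge to
`∫ f dν`, for any lengths `K n → ∞` and any starting points `y n ∈ Y n`. -/
theorem uniquely_ergodic_finite_approximation
    {X : Type*} [MetricSpace X] [CompactSpace X] [MeasurableSpace X] [BorelSpace X]
    (τ : X → X) (hτc : Continuous τ)
    (ν : Measure X) [IsProbabilityMeasure ν] (hν : MeasurePreserving τ ν ν)
    (huniq : ∀ μ : Measure X, IsProbabilityMeasure μ → MeasurePreserving τ μ μ → μ = ν)
    (hmin : ∀ x : X, Dense (Set.range fun j : ℕ => τ^[j] x))
    (Y : ℕ → Finset X) (hY : ∀ n, (Y n).Nonempty)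
    (T : ℕ → X → X) (hT : ∀ n, Set.BijOn (T n) ↑(Y n) ↑(Y n))
    (hdense : ∀ ε > (0 : ℝ), ∃ n₀, ∀ n ≥ n₀, ∀ x : X, Metric.infDist x ↑(Y n) < ε)
    (happrox : ∀ ε > (0 : ℝ), ∃ n₀, ∀ n ≥ n₀, ∀ y ∈ Y n, dist (T n y) (τ y) < ε)
    (f : X → ℝ) (hf : Continuous f)
    (K : ℕ → ℕ) (hK : Tendsto K atTop atTop)
    (y : ℕ → X) (hy : ∀ n, y n ∈ Y n) :
    Tendsto (fun n => (1 / (K n : ℝ)) * ∑ j ∈ Finset.range (K n), f ((T n)^[j] (y n)))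
      atTop (𝓝 (∫ x, f x ∂ν)) := by
  exact uniquely_ergodic_finite_approximation_general hτc huniq hK
    (isAsymptoticPseudoOrbit_iterate (fun n => (hT n).mapsTo)
      (fun ε hε => eventually_atTop.2 (happrox ε hε)) hy K) hf
end
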